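/- Let λ be a partition of r with conjugate μ = λ' = (μ_1,…,μ_ℓ), and let k_1,…,k_{ℓ−1} be positive integers with k_c ≤ μ_{c+1} for all c. If μ_c > μ_{c+1} for every c such that k_c = μ_{c+1} > 1, then M^λ / GR^λ(k_1,…,k_{ℓ−1}) ≅ S^λ as 𝔖_r-modules; equivalently, GR^λ(k_1,…,k_{ℓ−1}) = G^λ as subspaces of M^λ. -/

import Mathlib

set_option synthInstance.maxHeartbeats 1000000
set_option maxSynthPendingDepth 3
set_option maxHeartbeats 1000000

noncomputable section

namespace Specht

variable (K : Type) [Field K] [CharZero K]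
variable {L : ℕ} (μ : Fin L → ℕ) (r : ℕ)

/-- The cells of the Young diagram of `λ`, where `μ = λ'` records the column lengths:
`⟨c, j⟩` is the cell in column `c` and row `j` (`0`-indexed). -/
abbrev Cell : Type := Σ c : Fin L, Fin (μ c)

/-- Young tableaux of shape `λ`: bijective fillings of the diagram of `λ` by `{1, …, r}`. -/
abbrev Tab : Type := Cell μ ≃ Fin r

/-- The free vector space on the set of Young tableaux of shape `λ`. -/
abbrev FreeTab : Type := Tab μ r →₀ K

/-- The relations `T + S = 0`, for `S` obtained from `T` by a transposition of two entries
in the same column. -/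
def colRel : Submodule K (FreeTab K μ r) :=
  Submodule.span K
    {x | ∃ (T : Tab μ r) (c : Fin L) (j₁ j₂ : Fin (μ c)), j₁ ≠ j₂ ∧
      x = Finsupp.single T 1 +
        Finsupp.single ((Equiv.swap (⟨c, j₁⟩ : Cell μ) ⟨c, j₂⟩).trans T) 1}

/-- The module `M^λ` spanned by column tabloids. -/
abbrev MLam : Type := FreeTab K μ r ⧸ colRel K μ r

/-- The column tabloid of a tableau. -/
def tabloid (T : Tab μ r) : MLam K μ r :=
  Submodule.Quotient.mk (Finsupp.single T 1)

/-- `ρ` is the action of the symmetric group `𝔖_r` on `M^λ` by relabelling entries. -/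
def IsTabAction (ρ : Equiv.Perm (Fin r) → (MLam K μ r →ₗ[K] MLam K μ r)) : Prop :=
  ∀ (σ : Equiv.Perm (Fin r)) (T : Tab μ r), ρ σ (tabloid K μ r T) = tabloid K μ r (T.trans σ)

/-- The permutation of the cells exchanging the top `k` cells of column `c+1` with
the `k` cells of column `c` recorded by `A`, in increasing row order. -/
def exchPerm (c : ℕ) (hc : c + 1 < L) (k : ℕ) (hk : k ≤ μ ⟨c+1, hc⟩)
    (A : Finset (Fin (μ ⟨c, by omega⟩))) (hA : A.card = k) : Equiv.Perm (Cell μ) :=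
  (List.ofFn (fun i : Fin k =>
    Equiv.swap (⟨⟨c, by omega⟩, ((A.orderIsoOfFin hA i : A) : Fin (μ ⟨c, by omega⟩))⟩ : Cell μ)
      ⟨⟨c+1, hc⟩, ⟨i.val, by omega⟩⟩)).prod

/-- The Garnir element `g^T_{c,k} = T̄ - Σ S̄ ∈ M^λ`, the sum being over all tableaux `S`
obtained from `T` by exchanging the top `k` entries of column `c+1` with `k` entries of
column `c`, maintaining the vertical order of each exchanged set. -/
def garnirElt (T : Tab μ r) (c : ℕ) (hc : c + 1 < L) (k : ℕ) (hk : k ≤ μ ⟨c+1, hc⟩) :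
    MLam K μ r :=
  tabloid K μ r T -
    ∑ A ∈ (Finset.powersetCard k (Finset.univ : Finset (Fin (μ ⟨c, by omega⟩)))).attach,
      tabloid K μ r
        ((exchPerm μ c hc k hk A.1 (Finset.mem_powersetCard.mp A.2).2).trans T)

/-- The permutation of the cells exchanging the `k` cells of column `c+1` recorded by `B`
with the `k` cells of column `c` recorded by `A`, in increasing row order. -/
def exch2Perm (c : ℕ) (hc : c + 1 < L)  (k : ℕ)
    (A : Finset (Fin (μ ⟨c, by omega⟩))) (hA : A.card = k)
    (B : Finset (Fin (μ ⟨c+1, hc⟩))) (hB : B.card = k) : Equiv.Perm (Cell μ) :=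
  (List.ofFn (fun i : Fin k =>
    Equiv.swap (⟨⟨c, by omega⟩, ((A.orderIsoOfFin hA i : A) : Fin (μ ⟨c, by omega⟩))⟩ : Cell μ)
      ⟨⟨c+1, hc⟩, ((B.orderIsoOfFin hB i : B) : Fin (μ ⟨c+1, hc⟩))⟩)).prod

/-- The symmetrized Garnir element `r^T_{c,k} = C(μ_{c+1},k)·T̄ - Σ S̄ ∈ M^λ`, the sum being
over all tableaux `S` obtained from `T` by exchanging any `k` entries of column `c+1` with
any `k` entries of column `c`, maintaining the vertical order of each exchanged set. -/
def sgrElt (T : Tab μ r) (c : ℕ) (hc : c + 1 < L) (k : ℕ) : MLam K μ r :=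
  ((μ ⟨c+1, hc⟩).choose k : K) • tabloid K μ r T -
    ∑ A ∈ (Finset.powersetCard k (Finset.univ : Finset (Fin (μ ⟨c, by omega⟩)))).attach,
      ∑ B ∈ (Finset.powersetCard k (Finset.univ : Finset (Fin (μ ⟨c+1, hc⟩)))).attach,
        tabloid K μ r
          ((exch2Perm μ c hc k A.1 (Finset.mem_powersetCard.mp A.2).2
              B.1 (Finset.mem_powersetCard.mp B.2).2).trans T)

/-- The subspace `G^λ ⊆ M^λ` spanned by all Garnir relations. -/
def garnirSub : Submodule K (MLam K μ r) :=
  Submodule.span K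
    {x | ∃ (T : Tab μ r) (c : ℕ) (hc : c + 1 < L) (k : ℕ) (hk : k ≤ μ ⟨c+1, hc⟩),
      x = garnirElt K μ r T c hc k hk}

/-- The subspace `GR^λ(k_1, …, k_{λ_1 - 1}) ⊆ M^λ` spanned by the Garnir relations
`g^T_{c,k_c}`. -/
def grSub (kk : ℕ → ℕ) : Submodule K (MLam K μ r) :=
  Submodule.span K
    {x | ∃ (T : Tab μ r) (c : ℕ) (hc : c + 1 < L) (hk : kk c ≤ μ ⟨c+1, hc⟩),
      x = garnirElt K μ r T c hc (kk c) hk}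

/-- The subspace `SGR^λ(k_1, …, k_{λ_1 - 1}) ⊆ M^λ` spanned by the symmetrized Garnir
relations `r^T_{c,k_c}`. -/
def sgrSub (kk : ℕ → ℕ) : Submodule K (MLam K μ r) :=
  Submodule.span K
    {x | ∃ (T : Tab μ r) (c : ℕ) (hc : c + 1 < L), x = sgrElt K μ r T c hc (kk c)}

/-- Quotients `M₁ ⧸ N₁` and `M₂ ⧸ N₂` are isomorphic compatibly with the given actions. -/
def IsQuotIso {G' : Type} {M₁ M₂ : Type} [AddCommGroup M₁] [Module K M₁]
    [AddCommGroup M₂] [Module K M₂]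
    (N₁ : Submodule K M₁) (N₂ : Submodule K M₂)
    (ρ₁ : G' → M₁ →ₗ[K] M₁) (ρ₂ : G' → M₂ →ₗ[K] M₂) : Prop :=
  ∃ e : (M₁ ⧸ N₁) ≃ₗ[K] (M₂ ⧸ N₂),
    ∀ (g : G') (x : M₁) (y : M₂),
      e (Submodule.Quotient.mk x) = Submodule.Quotient.mk y →
      e (Submodule.Quotient.mk (ρ₁ g x)) = Submodule.Quotient.mk (ρ₂ g y)

end Specht

namespace Specht

/-!
Fix two adjacent columns and the `k` top cells of the right one. In a quotient of `M^λ`, the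
tabloids obtained from `T` by permuting the entries in these `μ_c + k` cells are, up to sign,
the values of a function on the `k`-subsets of the cells. The relations `g_{c,k}` say that this
function is an eigenfunction of the Kneser graph for the eigenvalue `(-1)^k`, and the relations
`g_{c,1}` that its sum over the `k`-subsets containing any given `(k - 1)`-subset vanishes, that
is, that it is harmonic.

By inclusion-exclusion, harmonic functions are such eigenfunctions. Conversely, summing the
eigenvalue equation over the `k`-sets containing a set `D` of size `d < k`, with the sums over
supersets of smaller sets already known to vanish, multiplies the sum over supersets of `D` by
`± C(μ_c - d, k - d)`, while it must be preserved up to sign. The binomial coefficient exceeds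
`1` as soon as `k < μ_c`, so the sum vanishes.
-/

section SubsetFunctions

open Finset

lemma eq_zero_of_neg_one_pow_smul_eq {V : Type*} [AddCommGroup V] [IsAddTorsionFree V]
    {a b n : ℕ} {x : V} (hn : 1 < n)
    (h : (-1 : ℤ) ^ a • x = n • (-1 : ℤ) ^ b • x) : x = 0 := by
  rw [← natCast_zsmul, smul_smul, ← sub_eq_zero, ← sub_smul] at h
  refine (smul_eq_zero.mp h).resolve_left ?_
  rcases neg_one_pow_eq_or ℤ a with ha | ha <;> rcases neg_one_pow_eq_or ℤ b with hb | hb <;>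
    rw [ha, hb] <;> omega

variable {α V : Type*} [Fintype α] [DecidableEq α] [AddCommGroup V]

/-- The sum of `φ` over the `k`-subsets of `α` that contain `D`. -/
def supersetSum (k : ℕ) (φ : Finset α → V) (D : Finset α) : V :=
  ∑ B ∈ powersetCard k univ with D ⊆ B, φ B

/-- Harmonic functions on the `k`-subsets of `α`: those whose sum over the `k`-sets containing
any given `(k - 1)`-set vanishes. -/
def IsHarmonic (k : ℕ) (φ : Finset α → V) : Prop :=
  ∀ D : Finset α, #D + 1 = k → supersetSum k φ D = 0

/-- Eigenfunctions, for the eigenvalue `(-1) ^ k`, of the adjacency operator of the Kneser graph,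
in which two `k`-subsets of `α` are adjacent when they are disjoint. -/
def IsKneserEigenfunction (k : ℕ) (φ : Finset α → V) : Prop :=
  ∀ B : Finset α, #B = k → ∑ B' ∈ powersetCard k Bᶜ, φ B' = (-1 : ℤ) ^ k • φ B

variable {k : ℕ} {φ : Finset α → V} {D : Finset α}

lemma supersetSum_of_card_eq (hD : #D = k) : supersetSum k φ D = φ D := by
  have hfilter : ({B ∈ powersetCard k univ | D ⊆ B} : Finset (Finset α)) = {D} := by
    ext B
    simp only [mem_filter, mem_powersetCard_univ, mem_singleton]
    constructor
    · rintro ⟨hB, hDB⟩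
      exact (eq_of_subset_of_card_le hDB (by omega)).symm
    · rintro rfl
      exact ⟨hD, Subset.rfl⟩
  rw [supersetSum, hfilter, sum_singleton]

lemma sum_supersetSum_insert (k : ℕ) (φ : Finset α → V) (D : Finset α) :
    ∑ u ∈ Dᶜ, supersetSum k φ (insert u D) = ((k : ℤ) - #D) • supersetSum k φ D := by
  have hswap : ∀ u B, u ∈ Dᶜ ∧ B ∈ ({B ∈ powersetCard k univ | insert u D ⊆ B} : Finset _) ↔
      u ∈ B \ D ∧ B ∈ ({B ∈ powersetCard k univ | D ⊆ B} : Finset _) := by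
    intro u B
    simp only [mem_compl, mem_filter, mem_sdiff, insert_subset_iff]
    tauto
  simp only [supersetSum]
  rw [sum_comm' hswap, smul_sum]
  refine sum_congr rfl fun B hB => ?_
  obtain ⟨hBk, hDB⟩ := mem_filter.mp hB
  rw [sum_const, card_sdiff_of_subset hDB, mem_powersetCard_univ.mp hBk, ← natCast_zsmul,
    Nat.cast_sub (mem_powersetCard_univ.mp hBk ▸ card_le_card hDB)]

lemma supersetSum_eq_sum_insert (hD : #D + 1 = k) :
    supersetSum k φ D = ∑ u ∈ Dᶜ, φ (insert u D) := by
  have hcoeff : (k : ℤ) - #D = 1 := by omega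
  rw [← one_zsmul (supersetSum k φ D), ← hcoeff, ← sum_supersetSum_insert]
  refine sum_congr rfl fun u hu => supersetSum_of_card_eq ?_
  rw [card_insert_of_notMem (mem_compl.mp hu), hD]

lemma sum_powersetCard_compl_eq_sum_powerset (k : ℕ) (φ : Finset α → V) (D : Finset α) :
    ∑ B ∈ powersetCard k Dᶜ, φ B = ∑ E ∈ D.powerset, (-1 : ℤ) ^ #E • supersetSum k φ E := by
  have h := inclusion_exclusion_sum_inf_compl D (fun u => ({B | u ∈ B} : Finset (Finset α)))
    (fun B => if #B = k then φ B else 0)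
  have hinf : ∀ E : Finset α,
      (E.inf fun u => ({B | u ∈ B} : Finset (Finset α))) = ({B | E ⊆ B} : Finset _) := by
    intro E
    ext B
    simp [mem_inf, subset_iff]
  have hinf_compl : (D.inf fun u => ({B | u ∈ B} : Finset (Finset α))ᶜ) = Dᶜ.powerset := by
    ext B
    simp only [mem_inf, mem_compl, mem_filter, mem_univ, true_and, mem_powerset,
      subset_compl_iff_disjoint_left, disjoint_left]
  simp only [hinf, hinf_compl, ← sum_filter, filter_filter] at h
  rw [powersetCard_eq_filter, h]
  simp only [supersetSum, powersetCard_eq_filter, powerset_univ, filter_filter, and_comm]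

/-- Each `k`-set `B'` disjoint from `D` is counted once for every `k`-set between `D` and the
complement of `B'`. -/
lemma sum_supersets_sum_powersetCard_compl (φ : Finset α → V) (hD : #D ≤ k) :
    ∑ B ∈ powersetCard k univ with D ⊆ B, ∑ B' ∈ powersetCard k Bᶜ, φ B' =
      (Fintype.card α - k - #D).choose (k - #D) • ∑ B' ∈ powersetCard k Dᶜ, φ B' := by
  have hswap : ∀ B B' : Finset α,
      B ∈ ({B ∈ powersetCard k univ | D ⊆ B} : Finset _) ∧ B' ∈ powersetCard k Bᶜ ↔
        B ∈ ({B ∈ powersetCard k B'ᶜ | D ⊆ B} : Finset _) ∧ B' ∈ powersetCard k Dᶜ := by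
    intro B B'
    simp only [mem_filter, mem_powersetCard, subset_univ, true_and, subset_compl_comm (s := B')]
    exact ⟨fun h => ⟨⟨⟨h.2.1, h.1.1⟩, h.1.2⟩, h.1.2.trans h.2.1, h.2.2⟩,
      fun h => ⟨⟨h.1.1.2, h.1.2⟩, h.1.1.1, h.2.2⟩⟩
  rw [sum_comm' hswap, smul_sum]
  refine sum_congr rfl fun B' hB' => ?_
  obtain ⟨hB'D, hB'k⟩ := mem_powersetCard.mp hB'
  rw [sum_const, card_filter_powersetCard_subset _ _ _ (subset_compl_comm.mp hB'D) hD,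
    card_compl, hB'k]

lemma IsKneserEigenfunction.smul_supersetSum (h : IsKneserEigenfunction k φ) (hD : #D ≤ k) :
    (-1 : ℤ) ^ k • supersetSum k φ D =
      (Fintype.card α - k - #D).choose (k - #D) • ∑ B ∈ powersetCard k Dᶜ, φ B := by
  rw [← sum_supersets_sum_powersetCard_compl φ hD, supersetSum, smul_sum]
  refine sum_congr rfl fun B hB => (h B ?_).symm
  exact mem_powersetCard_univ.mp (mem_filter.mp hB).1

variable [IsAddTorsionFree V]

lemma IsHarmonic.supersetSum_eq_zero (h : IsHarmonic k φ) (hD : #D < k) :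
    supersetSum k φ D = 0 := by
  induction hn : k - #D - 1 generalizing D with
  | zero => exact h D (by omega)
  | succ n ih =>
    have hsmul : ((k : ℤ) - #D) • supersetSum k φ D = 0 := by
      rw [← sum_supersetSum_insert]
      refine sum_eq_zero fun u hu => ?_
      have hcard := card_insert_of_notMem (mem_compl.mp hu)
      exact ih (by omega) (by omega)
    exact (smul_eq_zero.mp hsmul).resolve_left (by omega)

theorem IsHarmonic.isKneserEigenfunction (h : IsHarmonic k φ) : IsKneserEigenfunction k φ := by
  intro B hB
  rw [sum_powersetCard_compl_eq_sum_powerset, sum_eq_single_of_mem B (mem_powerset_self B),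
    supersetSum_of_card_eq hB, hB]
  intro E hE hne
  have hlt : #E < #B := card_lt_card ((mem_powerset.mp hE).ssubset_of_ne hne)
  rw [h.supersetSum_eq_zero (hB ▸ hlt), smul_zero]

theorem IsKneserEigenfunction.isHarmonic (h : IsKneserEigenfunction k φ)
    (hk : 2 * k < Fintype.card α) : IsHarmonic k φ := by
  suffices hzero : ∀ D : Finset α, #D < k → supersetSum k φ D = 0 from
    fun D hD => hzero D (by omega)
  intro D
  induction D using Finset.strongInduction with
  | H D ih =>
    intro hD
    have hcompl : ∑ B ∈ powersetCard k Dᶜ, φ B = (-1 : ℤ) ^ #D • supersetSum k φ D := by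
      rw [sum_powersetCard_compl_eq_sum_powerset, sum_eq_single_of_mem D (mem_powerset_self D)]
      intro E hE hne
      have hED := (mem_powerset.mp hE).ssubset_of_ne hne
      rw [ih E hED ((card_lt_card hED).trans hD), smul_zero]
    have hchoose : 1 < (Fintype.card α - k - #D).choose (k - #D) := by
      have hpos := Nat.choose_pos (show k - #D ≤ Fintype.card α - k - #D by omega)
      have hne := mt Nat.choose_eq_one_iff.mp
        (show ¬(k - #D = 0 ∨ Fintype.card α - k - #D = k - #D) by omega)
      omega
    have hsmul := h.smul_supersetSum hD.le
    rw [hcompl] at hsmul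
    exact eq_zero_of_neg_one_pow_smul_eq hchoose hsmul

end SubsetFunctions

section ExchangeRelations

open Equiv Finset
open scoped Pointwise

lemma exists_perm_smul_eq {α : Type*} [DecidableEq α] {A B : Finset α} (h : #A = #B) :
    ∃ p : Perm α, p • A = B := by
  have := Set.powersetCard.isPretransitive (α := α) (n := #B)
  obtain ⟨p, hp⟩ := MulAction.exists_smul_eq (Perm α)
    (⟨A, h⟩ : Set.powersetCard α #B) ⟨B, rfl⟩
  exact ⟨p, congrArg Subtype.val hp⟩

lemma sum_powersetCard_smul {α V : Type*} [DecidableEq α] [AddCommMonoid V] (p : Perm α)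
    (k : ℕ) (S : Finset α) (φ : Finset α → V) :
    ∑ B ∈ powersetCard k (p • S), φ B = ∑ B ∈ powersetCard k S, φ (p • B) := by
  refine (sum_equiv (MulAction.toPerm p) (fun B => ?_) fun _ _ => rfl).symm
  simp [mem_powersetCard]

variable (β γ : Type*) {V : Type*} [Fintype γ] [DecidableEq β] [DecidableEq γ] [AddCommGroup V]

/-- The right summand of `β ⊕ γ`, as a finset. -/
abbrev rightSummand : Finset (β ⊕ γ) := univ.map Function.Embedding.inr

variable {β γ}

lemma card_erase_inr_rightSummand (c : γ) :
    #((rightSummand β γ).erase (.inr c)) + 1 = Fintype.card γ := by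
  have hc : (.inr c : β ⊕ γ) ∈ rightSummand β γ := mem_map_of_mem _ (mem_univ c)
  rw [card_erase_add_one hc, card_map, card_univ]

lemma exists_sumCongr_eq_of_smul_rightSummand [Finite β] {h : Perm (β ⊕ γ)}
    (hh : h • rightSummand β γ = rightSummand β γ) :
    ∃ (s : Perm β) (t : Perm γ), sumCongr s t = h := by
  have hmaps : Set.MapsTo h (Set.range Sum.inr) (Set.range Sum.inr) := by
    rintro _ ⟨c, rfl⟩
    have hmem : h • (Sum.inr c : β ⊕ γ) ∈ rightSummand β γ :=
      hh ▸ smul_mem_smul_finset (mem_map_of_mem _ (mem_univ c))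
    obtain ⟨c', -, hc'⟩ := mem_map.mp hmem
    exact ⟨c', hc'⟩
  obtain ⟨⟨s, t⟩, hst⟩ := Perm.mem_sumCongrHom_range_of_perm_mapsTo_inl
    ((Perm.perm_mapsTo_inl_iff_mapsTo_inr h).mpr hmaps)
  exact ⟨s, t, hst⟩

variable [Fintype β]

lemma compl_rightSummand : (rightSummand β γ)ᶜ = univ.map Function.Embedding.inl := by
  ext (b | c) <;> simp

/-- Functions on the permutations of `β ⊕ γ` that transform by the sign under right
multiplication by permutations preserving the two summands. -/
def IsAlternating (f : Perm (β ⊕ γ) → V) : Prop :=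
  ∀ p h : Perm (β ⊕ γ), h • rightSummand β γ = rightSummand β γ → f (p * h) = Perm.sign h • f p

lemma isAlternating_of_swap {f : Perm (β ⊕ γ) → V}
    (hl : ∀ p (x y : β), x ≠ y → f (p * swap (.inl x) (.inl y)) = -f p)
    (hr : ∀ p (x y : γ), x ≠ y → f (p * swap (.inr x) (.inr y)) = -f p) : IsAlternating f := by
  have hleft : ∀ (s : Perm β) p, f (p * sumCongr s (1 : Perm γ)) = Perm.sign s • f p := by
    intro s
    induction s using Perm.swap_induction_on with
    | one => simp [Perm.sumCongr_one]
    | swap_mul s x y hxy ih =>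
      intro p
      have hmul : sumCongr (swap x y * s) (1 : Perm γ) =
          swap (.inl x) (.inl y) * sumCongr s (1 : Perm γ) := by
        rw [← Perm.sumCongr_swap_one, Perm.sumCongr_mul, mul_one]
      rw [hmul, ← mul_assoc, ih, hl p x y hxy, Perm.sign_mul, Perm.sign_swap hxy]
      simp
  have hright : ∀ (t : Perm γ) p, f (p * sumCongr (1 : Perm β) t) = Perm.sign t • f p := by
    intro t
    induction t using Perm.swap_induction_on with
    | one => simp [Perm.sumCongr_one]
    | swap_mul t x y hxy ih =>
      intro p
      have hmul : sumCongr (1 : Perm β) (swap x y * t) =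
          swap (.inr x) (.inr y) * sumCongr (1 : Perm β) t := by
        rw [← Perm.sumCongr_one_swap, Perm.sumCongr_mul, mul_one]
      rw [hmul, ← mul_assoc, ih, hr p x y hxy, Perm.sign_mul, Perm.sign_swap hxy]
      simp
  intro p h hh
  obtain ⟨s, t, rfl⟩ := exists_sumCongr_eq_of_smul_rightSummand hh
  have hmul : sumCongr s t = sumCongr s 1 * sumCongr 1 t := by
    rw [Perm.sumCongr_mul, mul_one, one_mul]
  rw [hmul, ← mul_assoc, hright, hleft, smul_smul, ← hmul, Perm.sign_sumCongr, mul_comm]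

/-- The function on subsets sending `p • rightSummand β γ` to `sign p • f p`; this is well
defined when `f` is alternating (`subsetFun_smul`). Its value at subsets of any other
cardinality is `0`. -/
def subsetFun (f : Perm (β ⊕ γ) → V) : Finset (β ⊕ γ) → V :=
  Function.extend (fun p : Perm (β ⊕ γ) => p • rightSummand β γ)
    (fun p => Perm.sign p • f p) 0

variable {f : Perm (β ⊕ γ) → V}

lemma IsAlternating.subsetFun_smul (hf : IsAlternating f) (p : Perm (β ⊕ γ)) :
    subsetFun f (p • rightSummand β γ) = Perm.sign p • f p := by
  refine Function.FactorsThrough.extend_apply (fun p p' hpp' => ?_) _ p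
  have hstab : (p⁻¹ * p') • rightSummand β γ = rightSummand β γ := by
    rw [mul_smul, inv_smul_eq_iff]
    exact hpp'.symm
  have hp' := hf p (p⁻¹ * p') hstab
  rw [mul_inv_cancel_left] at hp'
  change Perm.sign p • f p = Perm.sign p' • f p'
  rw [hp', smul_smul, Perm.sign_mul, Perm.sign_inv, mul_left_comm, Int.units_mul_self, mul_one]

lemma IsAlternating.apply_mul (hf : IsAlternating f) (p e : Perm (β ⊕ γ)) :
    f (p * e) = Perm.sign p • Perm.sign e • subsetFun f (p • e • rightSummand β γ) := by
  rw [smul_smul p e, hf.subsetFun_smul, smul_smul, smul_smul, ← Perm.sign_mul,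
    Int.units_mul_self, one_smul]

lemma IsAlternating.sub_sum_swap (hf : IsAlternating f) (p : Perm (β ⊕ γ)) (c : γ) :
    f p - ∑ b : β, f (p * swap (.inl b) (.inr c)) = Perm.sign p •
      supersetSum (Fintype.card γ) (subsetFun f) (p • (rightSummand β γ).erase (.inr c)) := by
  set R := rightSummand β γ
  set c' : β ⊕ γ := .inr c
  have hc : c' ∈ R := mem_map_of_mem _ (mem_univ c)
  have hcard : #(p • R.erase c') + 1 = Fintype.card γ := by
    rw [card_smul_finset, card_erase_inr_rightSummand]
  have hcompl : (p • R.erase c')ᶜ = p • insert c' (univ.map .inl) := by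
    rw [compl_eq_univ_sdiff, ← compl_rightSummand, ← compl_erase, compl_eq_univ_sdiff,
      smul_finset_sdiff, smul_finset_univ]
  have hinsert : ∀ u, insert (p • u) (p • R.erase c') = p • insert u (R.erase c') :=
    fun u => (smul_finset_insert p u _).symm
  have hswap : ∀ b : β, insert (.inl b) (R.erase c') = swap (.inl b) c' • R := by
    intro b
    ext x
    rw [← inv_smul_mem_iff, swap_inv, Perm.smul_def, swap_apply_def]
    rcases x with b' | c₁ 
    · by_cases h : b' = b <;> simp [R, c', h]
    · by_cases h : c₁ = c <;> simp [R, c', h]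
  have hterm : ∀ b : β, f (p * swap (.inl b) c') =
      -(Perm.sign p • subsetFun f (p • insert (.inl b) (R.erase c'))) := by
    intro b
    rw [hf.apply_mul, Perm.sign_swap Sum.inl_ne_inr, hswap, Units.neg_smul, one_smul, smul_neg]
  have hsum : ∑ u ∈ p • insert c' (univ.map .inl), subsetFun f (insert u (p • R.erase c')) =
      subsetFun f (p • R) + ∑ b : β, subsetFun f (p • insert (.inl b) (R.erase c')) := by
    rw [smul_finset_def, sum_image (MulAction.injective p).injOn, sum_insert (by simp [c']),
      sum_map, hinsert, insert_erase hc]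
    exact congrArg _ (sum_congr rfl fun b _ => congrArg _ (hinsert _))
  rw [supersetSum_eq_sum_insert hcard, hcompl, hsum, smul_add, hf.subsetFun_smul, smul_smul,
    Int.units_mul_self, one_smul, sum_congr rfl fun b _ => hterm b, sum_neg_distrib,
    sub_neg_eq_add, smul_sum]

variable {k : ℕ}

/-- Permutations `e A`, for the subsets `A` of `β` of cardinality `k`, that move
`Fin k` to `A` and have the sign of a product of `k` transpositions. -/
def IsExchangeFamily
    (e : powersetCard k (univ : Finset β) → Perm (β ⊕ Fin k)) : Prop :=
  ∀ A, e A • rightSummand β (Fin k) = A.1.map .inl ∧ Perm.sign (e A) = (-1) ^ k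

variable {e : powersetCard k (univ : Finset β) → Perm (β ⊕ Fin k)}

lemma IsAlternating.sub_sum_exchange {f : Perm (β ⊕ Fin k) → V}
    (hf : IsAlternating f) (he : IsExchangeFamily e)
    (p : Perm (β ⊕ Fin k)) :
    f p - ∑ A, f (p * e A) = Perm.sign p • (subsetFun f (p • rightSummand β (Fin k)) -
      (-1 : ℤ) ^ k •
        ∑ B ∈ powersetCard k (p • rightSummand β (Fin k))ᶜ, subsetFun f B) := by
  have hterm : ∀ A, f (p * e A) =
      Perm.sign p • (-1 : ℤ) ^ k • subsetFun f (p • A.1.map .inl) := by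
    intro A
    rw [hf.apply_mul, (he A).1, (he A).2, Units.smul_def ((-1) ^ _), Units.val_pow_eq_pow_val,
      Units.val_neg, Units.val_one]
  have hcompl : (p • rightSummand β (Fin k))ᶜ = p • univ.map .inl := by
    rw [← compl_rightSummand, compl_eq_univ_sdiff, compl_eq_univ_sdiff, smul_finset_sdiff,
      smul_finset_univ]
  rw [hcompl, sum_powersetCard_smul, powersetCard_map, sum_map, smul_sub, hf.subsetFun_smul,
    smul_smul, Int.units_mul_self, one_smul, sum_congr rfl fun A _ => hterm A, ← smul_sum,
    ← smul_sum, univ_eq_attach]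
  exact congrArg _ (congrArg _ (congrArg _ (sum_attach _ fun A : Finset β =>
    subsetFun f (p • A.map .inl))))

variable [IsAddTorsionFree V] {f : Perm (β ⊕ Fin k) → V}

theorem IsAlternating.eq_sum_swap_of_eq_sum_exchange (hf : IsAlternating f)
    (he : IsExchangeFamily e) (hcard : k < Fintype.card β)
    (h : ∀ p, f p = ∑ A, f (p * e A)) (p : Perm (β ⊕ Fin k)) (c : Fin k) :
    f p = ∑ b : β, f (p * swap (.inl b) (.inr c)) := by
  have hkneser : IsKneserEigenfunction (k) (subsetFun f) := by
    intro B hB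
    obtain ⟨p, rfl⟩ := exists_perm_smul_eq (A := rightSummand β (Fin k)) (B := B) (by simp [hB])
    have hp := hf.sub_sum_exchange he p
    rw [← h p, sub_self, eq_comm, smul_eq_zero_iff_eq, sub_eq_zero] at hp
    rw [hp, smul_smul, ← mul_pow, neg_one_mul, neg_neg, one_pow, one_smul]
  have hharmonic := hkneser.isHarmonic (by rw [Fintype.card_sum, Fintype.card_fin]; omega)
  rw [← sub_eq_zero, hf.sub_sum_swap, Fintype.card_fin, hharmonic, smul_zero]
  rw [card_smul_finset, card_erase_inr_rightSummand, Fintype.card_fin]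

theorem IsAlternating.eq_sum_exchange_of_eq_sum_swap (hf : IsAlternating f)
    (he : IsExchangeFamily e) (c : Fin k)
    (h : ∀ p, f p = ∑ b : β, f (p * swap (.inl b) (.inr c))) (p : Perm (β ⊕ Fin k)) :
    f p = ∑ A, f (p * e A) := by
  have hharmonic : IsHarmonic (k) (subsetFun f) := by
    intro D hD
    have hcard : #((rightSummand β (Fin k)).erase (.inr c)) + 1 = #D + 1 := by
      rw [card_erase_inr_rightSummand, Fintype.card_fin, hD]
    obtain ⟨p, rfl⟩ := exists_perm_smul_eq (Nat.add_right_cancel hcard)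
    have hp := hf.sub_sum_swap p c
    rwa [← h p, sub_self, eq_comm, smul_eq_zero_iff_eq, Fintype.card_fin] at hp
  have hkneser := hharmonic.isKneserEigenfunction (p • rightSummand β (Fin k)) (by simp)
  rw [← sub_eq_zero, hf.sub_sum_exchange he, hkneser, smul_smul, ← mul_pow, neg_one_mul, neg_neg,
    one_pow, one_smul, sub_self, smul_zero]

end ExchangeRelations

section ExchangePerm

open Equiv Finset
open scoped Pointwise

lemma viaEmbedding_swap {α β : Type*} [DecidableEq α] [DecidableEq β] (ι : α ↪ β) (x y : α) :
    (swap x y).viaEmbedding ι = swap (ι x) (ι y) := by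
  ext z
  by_cases hz : z ∈ Set.range ι
  · obtain ⟨w, rfl⟩ := hz
    rw [Perm.viaEmbedding_apply, ι.injective.map_swap]
  · rw [Perm.viaEmbedding_apply_of_notMem _ _ _ hz, swap_apply_of_ne_of_ne]
    · rintro rfl
      exact hz ⟨x, rfl⟩
    · rintro rfl
      exact hz ⟨y, rfl⟩

lemma viaEmbedding_prod_ofFn {α β : Type*} (ι : α ↪ β) {k : ℕ} (p : Fin k → Perm α) :
    (List.ofFn p).prod.viaEmbedding ι = (List.ofFn fun i => (p i).viaEmbedding ι).prod := by
  rw [← Perm.viaEmbeddingHom_apply, map_list_prod, List.map_ofFn]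
  rfl

variable {α : Type*} [DecidableEq α]

lemma prod_ofFn_swap_apply_right {k : ℕ} {a b : Fin k → α} (ha : Function.Injective a)
    (hb : Function.Injective b) (hab : ∀ i j, a i ≠ b j) (i : Fin k) :
    (List.ofFn fun i => swap (a i) (b i)).prod (b i) = a i := by
  induction k with
  | zero => exact i.elim0
  | succ k ih =>
    rw [List.ofFn_succ, List.prod_cons, Perm.mul_apply]
    cases i using Fin.cases with
    | zero =>
      have hfix : (List.ofFn fun i : Fin k => swap (a i.succ) (b i.succ)).prod ∈
          MulAction.stabilizer (Perm α) (b 0) := by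
        refine list_prod_mem fun p hp => ?_
        obtain ⟨j, rfl⟩ := List.mem_ofFn.mp hp
        exact swap_apply_of_ne_of_ne (hab _ _).symm (hb.ne (Fin.succ_ne_zero j).symm)
      exact (congrArg _ hfix).trans (swap_apply_right _ _)
    | succ i =>
      have htail := ih (ha.comp (Fin.succ_injective k)) (hb.comp (Fin.succ_injective k))
        (fun _ _ => hab _ _) i
      exact (congrArg _ htail).trans (swap_apply_of_ne_of_ne (ha.ne (Fin.succ_ne_zero i)) (hab _ _))

lemma sign_prod_ofFn_swap [Fintype α] {k : ℕ} {a b : Fin k → α} (hab : ∀ i, a i ≠ b i) :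
    Perm.sign (List.ofFn fun i => swap (a i) (b i)).prod = (-1) ^ k := by
  rw [map_list_prod, List.map_ofFn, List.prod_ofFn]
  simp [Perm.sign_swap (hab _)]

variable {β : Type*} [Fintype β] [LinearOrder β] {k : ℕ}

/-- The permutation of `β ⊕ Fin k` exchanging the `i`-th element of `A` with `i`, for each
`i : Fin k`. -/
def exchangePerm (A : powersetCard k (univ : Finset β)) : Perm (β ⊕ Fin k) :=
  (List.ofFn fun i : Fin k =>
    swap (.inl (A.1.orderEmbOfFin (mem_powersetCard.mp A.2).2 i)) (.inr i)).prod

lemma isExchangeFamily_exchangePerm : IsExchangeFamily (exchangePerm (β := β) (k := k)) := by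
  refine fun A => ⟨eq_of_subset_of_card_le ?_ ?_, sign_prod_ofFn_swap fun _ => Sum.inl_ne_inr⟩
  · rintro _ hx
    obtain ⟨_, hi, rfl⟩ := mem_smul_finset.mp hx
    obtain ⟨i, -, rfl⟩ := mem_map.mp hi
    have happly : exchangePerm A (.inr i) =
        .inl (A.1.orderEmbOfFin (mem_powersetCard.mp A.2).2 i) :=
      prod_ofFn_swap_apply_right (Sum.inl_injective.comp (RelEmbedding.injective _))
        Sum.inr_injective (fun _ _ => Sum.inl_ne_inr) i
    rw [Function.Embedding.inr_apply, Perm.smul_def, happly]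
    exact mem_map_of_mem _ (orderEmbOfFin_mem _ _ _)
  · rw [card_smul_finset, card_map, card_map, (mem_powersetCard.mp A.2).2, card_univ,
      Fintype.card_fin]

end ExchangePerm

section Garnir

open Equiv Finset

variable {K : Type} [Field K] {L r : ℕ} {μ : Fin L → ℕ}

lemma tabloid_swap_trans (T : Tab μ r) {c : Fin L} {i j : Fin (μ c)} (hij : i ≠ j) :
    tabloid K μ r ((swap (⟨c, i⟩ : Cell μ) ⟨c, j⟩).trans T) = -tabloid K μ r T := by
  rw [eq_neg_iff_add_eq_zero, add_comm, tabloid, tabloid, ← Submodule.Quotient.mk_add,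
    Submodule.Quotient.mk_eq_zero]
  exact Submodule.subset_span ⟨T, c, i, j, hij, rfl⟩

variable {c : ℕ} {hc : c + 1 < L} {k : ℕ}

/-- The cells taking part in the Garnir relation `g^T_{c,k}`: all those of column `c` and the
top `k` of column `c + 1`. -/
def garnirCells (hk : k ≤ μ ⟨c + 1, hc⟩) :
    Fin (μ ⟨c, Nat.lt_of_succ_lt hc⟩) ⊕ Fin k ↪ Cell μ where
  toFun := Sum.elim (fun j => ⟨⟨c, Nat.lt_of_succ_lt hc⟩, j⟩)
    (fun i => ⟨⟨c + 1, hc⟩, Fin.castLE hk i⟩)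
  inj' := by
    rintro (i | i) (j | j) <;> simp

/-- The images in `M^λ ⧸ N` of the tabloids obtained by permuting the entries of `T` in the
cells of `garnirCells hk`. -/
def garnirOrbit (N : Submodule K (MLam K μ r)) (hk : k ≤ μ ⟨c + 1, hc⟩) (T : Tab μ r)
    (p : Perm (Fin (μ ⟨c, Nat.lt_of_succ_lt hc⟩) ⊕ Fin k)) : MLam K μ r ⧸ N :=
  N.mkQ (tabloid K μ r ((p.viaEmbedding (garnirCells hk)).trans T))

variable (N : Submodule K (MLam K μ r)) (hk : k ≤ μ ⟨c + 1, hc⟩) (T : Tab μ r)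

lemma garnirOrbit_one : garnirOrbit N hk T 1 = N.mkQ (tabloid K μ r T) := by
  rw [garnirOrbit, ← Perm.viaEmbeddingHom_apply, map_one]
  rfl

lemma garnirOrbit_mul (p e : Perm (Fin (μ ⟨c, Nat.lt_of_succ_lt hc⟩) ⊕ Fin k)) :
    garnirOrbit N hk T (p * e) =
      garnirOrbit N hk ((p.viaEmbedding (garnirCells hk)).trans T) e := by
  rw [garnirOrbit, ← Perm.viaEmbeddingHom_apply, map_mul]
  rfl

lemma isAlternating_garnirOrbit : IsAlternating (garnirOrbit N hk T) := by
  refine isAlternating_of_swap (fun p x y hxy => ?_) fun p x y hxy => ?_ <;>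
    rw [garnirOrbit_mul, garnirOrbit, viaEmbedding_swap, garnirOrbit, ← map_neg]
  · exact congrArg _ (tabloid_swap_trans _ hxy)
  · exact congrArg _ (tabloid_swap_trans _ ((Fin.castLE_injective hk).ne hxy))

lemma mkQ_garnirElt : N.mkQ (garnirElt K μ r T c hc k hk) =
    garnirOrbit N hk T 1 - ∑ A, garnirOrbit N hk T (exchangePerm A) := by
  have hexch : ∀ A : powersetCard k (univ : Finset (Fin (μ ⟨c, Nat.lt_of_succ_lt hc⟩))),
      (exchangePerm A).viaEmbedding (garnirCells hk) =
        exchPerm μ c hc k hk A.1 (mem_powersetCard.mp A.2).2 := by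
    intro A
    rw [exchangePerm, viaEmbedding_prod_ofFn]
    simp only [viaEmbedding_swap]
    rfl
  simp only [garnirElt, map_sub, map_sum, garnirOrbit_one]
  simp only [garnirOrbit, hexch, univ_eq_attach]

lemma mkQ_garnirElt_trans (p : Perm (Fin (μ ⟨c, Nat.lt_of_succ_lt hc⟩) ⊕ Fin k)) :
    N.mkQ (garnirElt K μ r ((p.viaEmbedding (garnirCells hk)).trans T) c hc k hk) =
      garnirOrbit N hk T p - ∑ A, garnirOrbit N hk T (p * exchangePerm A) := by
  simp only [mkQ_garnirElt, ← garnirOrbit_mul, mul_one]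

lemma garnirElt_zero : garnirElt K μ r T c hc 0 (Nat.zero_le _) = 0 := by
  have hexch : ∀ A hA, (exchPerm μ c hc 0 (Nat.zero_le _) A hA).trans T = T := fun A hA => rfl
  simp [garnirElt, hexch]

lemma garnirElt_one (h1 : 1 ≤ μ ⟨c + 1, hc⟩) :
    garnirElt K μ r T c hc 1 h1 = tabloid K μ r T - ∑ j, tabloid K μ r
      ((swap (⟨⟨c, Nat.lt_of_succ_lt hc⟩, j⟩ : Cell μ) ⟨⟨c + 1, hc⟩, ⟨0, h1⟩⟩).trans T) := by
  have hexch : ∀ j : Fin (μ ⟨c, Nat.lt_of_succ_lt hc⟩),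
      exchPerm μ c hc 1 h1 {j} (card_singleton j) = swap ⟨_, j⟩ ⟨⟨c + 1, hc⟩, ⟨0, h1⟩⟩ := by
    intro j
    simp [exchPerm]
  rw [garnirElt]
  refine congrArg _ (sum_bij (fun j _ => ⟨{j}, by simp⟩) ?_ ?_ ?_ ?_).symm
  · simp
  · simp
  · rintro ⟨A, hA⟩ _
    obtain ⟨j, hj⟩ := card_eq_one.mp (mem_powersetCard.mp hA).2
    exact ⟨j, mem_univ j, Subtype.ext hj.symm⟩
  · intro j _
    rw [hexch]

lemma mkQ_garnirElt_one (hk1 : 0 < k) :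
    N.mkQ (garnirElt K μ r T c hc 1 (hk1.trans_le hk)) =
      garnirOrbit N hk T 1 - ∑ j, garnirOrbit N hk T (swap (.inl j) (.inr ⟨0, hk1⟩)) := by
  simp only [garnirElt_one, map_sub, map_sum, garnirOrbit_one]
  simp only [garnirOrbit, viaEmbedding_swap]
  rfl

lemma mkQ_garnirElt_one_trans (hk1 : 0 < k)
    (p : Perm (Fin (μ ⟨c, Nat.lt_of_succ_lt hc⟩) ⊕ Fin k)) :
    N.mkQ (garnirElt K μ r ((p.viaEmbedding (garnirCells hk)).trans T) c hc 1
        (hk1.trans_le hk)) =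
      garnirOrbit N hk T p - ∑ j, garnirOrbit N hk T (p * swap (.inl j) (.inr ⟨0, hk1⟩)) := by
  simp only [mkQ_garnirElt_one N hk _ hk1, ← garnirOrbit_mul, mul_one]

variable [CharZero K] {N hk}

theorem garnirElt_one_mem (hk1 : 0 < k) (hlt : k < μ ⟨c, Nat.lt_of_succ_lt hc⟩)
    (h : ∀ T, garnirElt K μ r T c hc k hk ∈ N) :
    garnirElt K μ r T c hc 1 (hk1.trans_le hk) ∈ N := by
  have : IsAddTorsionFree (MLam K μ r ⧸ N) := .of_isTorsionFree K _
  rw [← Submodule.Quotient.mk_eq_zero, ← Submodule.mkQ_apply, mkQ_garnirElt_one N hk T hk1,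
    sub_eq_zero]
  have hexchange : ∀ p, garnirOrbit N hk T p = ∑ A, garnirOrbit N hk T (p * exchangePerm A) := by
    intro p
    rw [← sub_eq_zero, ← mkQ_garnirElt_trans, Submodule.mkQ_apply, Submodule.Quotient.mk_eq_zero]
    exact h _
  simpa only [one_mul] using (isAlternating_garnirOrbit N hk T).eq_sum_swap_of_eq_sum_exchange
    isExchangeFamily_exchangePerm (by rwa [Fintype.card_fin]) hexchange 1 ⟨0, hk1⟩

theorem garnirElt_mem_of_one (h1 : 1 ≤ μ ⟨c + 1, hc⟩)
    (h : ∀ T, garnirElt K μ r T c hc 1 h1 ∈ N) : garnirElt K μ r T c hc k hk ∈ N := by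
  rcases Nat.eq_zero_or_pos k with rfl | hk1
  · rw [garnirElt_zero]
    exact N.zero_mem
  have : IsAddTorsionFree (MLam K μ r ⧸ N) := .of_isTorsionFree K _
  rw [← Submodule.Quotient.mk_eq_zero, ← Submodule.mkQ_apply, mkQ_garnirElt, sub_eq_zero]
  have hswap : ∀ p, garnirOrbit N hk T p =
      ∑ j, garnirOrbit N hk T (p * swap (.inl j) (.inr ⟨0, hk1⟩)) := by
    intro p
    rw [← sub_eq_zero, ← mkQ_garnirElt_one_trans, Submodule.mkQ_apply,
      Submodule.Quotient.mk_eq_zero]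
    exact h _
  simpa only [one_mul] using (isAlternating_garnirOrbit N hk T).eq_sum_exchange_of_eq_sum_swap
    isExchangeFamily_exchangePerm ⟨0, hk1⟩ hswap 1

end Garnir

section GarnirSpans

variable {K : Type} [Field K] {L r : ℕ} {μ : Fin L → ℕ}

lemma garnirElt_mem_garnirSub (T : Tab μ r) (c : ℕ) (hc : c + 1 < L) (k : ℕ)
    (hk : k ≤ μ ⟨c + 1, hc⟩) : garnirElt K μ r T c hc k hk ∈ garnirSub K μ r :=
  Submodule.subset_span ⟨T, c, hc, k, hk, rfl⟩

lemma garnirElt_mem_grSub {kk : ℕ → ℕ} (T : Tab μ r) (c : ℕ) (hc : c + 1 < L)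
    (hk : kk c ≤ μ ⟨c + 1, hc⟩) : garnirElt K μ r T c hc (kk c) hk ∈ grSub K μ r kk :=
  Submodule.subset_span ⟨T, c, hc, hk, rfl⟩

lemma grSub_le_garnirSub (kk : ℕ → ℕ) : grSub K μ r kk ≤ garnirSub K μ r := by
  refine Submodule.span_le.mpr ?_
  rintro _ ⟨T, c, hc, hk, rfl⟩
  exact garnirElt_mem_garnirSub T c hc (kk c) hk

theorem grSub_eq_garnirSub [CharZero K] {kk : ℕ → ℕ}
    (hk : ∀ (c : ℕ) (hc : c + 1 < L), 1 ≤ kk c ∧ kk c ≤ μ ⟨c + 1, hc⟩)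
    (hcond : ∀ (c : ℕ) (hc : c + 1 < L), kk c = 1 ∨ kk c < μ ⟨c, Nat.lt_of_succ_lt hc⟩) :
    grSub K μ r kk = garnirSub K μ r := by
  refine le_antisymm (grSub_le_garnirSub kk) (Submodule.span_le.mpr ?_)
  rintro _ ⟨T, c, hc, k, hkc, rfl⟩
  obtain ⟨hpos, hle⟩ := hk c hc
  refine garnirElt_mem_of_one T (hpos.trans hle) fun T' => ?_
  rcases hcond c hc with hone | hlt
  · have hmem := garnirElt_mem_grSub (K := K) T' c hc hle
    simpa only [hone] using hmem
  · exact garnirElt_one_mem T' hpos hlt fun T'' => garnirElt_mem_grSub T'' c hc hle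

variable {ρ : Equiv.Perm (Fin r) → (MLam K μ r →ₗ[K] MLam K μ r)}

lemma map_garnirElt (hρ : IsTabAction K μ r ρ) (g : Equiv.Perm (Fin r)) (T : Tab μ r) (c : ℕ)
    (hc : c + 1 < L) (k : ℕ) (hk : k ≤ μ ⟨c + 1, hc⟩) :
    ρ g (garnirElt K μ r T c hc k hk) = garnirElt K μ r (T.trans g) c hc k hk := by
  simp only [garnirElt, map_sub, map_sum, hρ g, Equiv.trans_assoc]

lemma garnirSub_le_comap (hρ : IsTabAction K μ r ρ) (g : Equiv.Perm (Fin r)) :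
    garnirSub K μ r ≤ (garnirSub K μ r).comap (ρ g) := by
  refine Submodule.span_le.mpr ?_
  rintro _ ⟨T, c, hc, k, hk, rfl⟩
  rw [SetLike.mem_coe, Submodule.mem_comap, map_garnirElt hρ]
  exact garnirElt_mem_garnirSub _ c hc k hk

lemma isQuotIso_of_eq {G' M : Type} [AddCommGroup M] [Module K M] {N₁ N₂ : Submodule K M}
    {ρ : G' → M →ₗ[K] M} (h : N₁ = N₂) (hρ : ∀ g, N₂ ≤ N₂.comap (ρ g)) :
    IsQuotIso K N₁ N₂ ρ ρ := by
  refine ⟨Submodule.quotEquivOfEq _ _ h, fun g x y hxy => ?_⟩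
  rw [Submodule.quotEquivOfEq_mk, Submodule.Quotient.eq] at hxy ⊢
  rw [← map_sub]
  exact hρ g hxy

theorem statement16_general [CharZero K] {kk : ℕ → ℕ}
    (hk : ∀ (c : ℕ) (hc : c + 1 < L), 1 ≤ kk c ∧ kk c ≤ μ ⟨c + 1, hc⟩)
    (hcond : ∀ (c : ℕ) (hc : c + 1 < L), kk c = 1 ∨ kk c < μ ⟨c, Nat.lt_of_succ_lt hc⟩)
    (hρ : IsTabAction K μ r ρ) :
    IsQuotIso K (grSub K μ r kk) (garnirSub K μ r) ρ ρ ∧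
      grSub K μ r kk = garnirSub K μ r :=
  have heq := grSub_eq_garnirSub hk hcond
  ⟨isQuotIso_of_eq heq (garnirSub_le_comap hρ), heq⟩

end GarnirSpans

/-- Theorem 6.4(2) of the paper: let `λ` be a partition of `r` with conjugate
`μ = (μ_1,…,μ_ℓ)` and let `k_1, …, k_{ℓ−1}` be positive integers with `k_c ≤ μ_{c+1}`.
If `μ_c > μ_{c+1}` for every `c` such that `k_c = μ_{c+1} > 1`, then
`M^λ / GR^λ(k_1,…,k_{ℓ−1}) ≅ S^λ` as `𝔖_r`-modules; equivalently
`GR^λ(k_1,…,k_{ℓ−1}) = G^λ` as subspaces of `M^λ`. -/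
theorem statement16 (K : Type) [Field K] [CharZero K] (L r : ℕ) (μ : Fin L → ℕ)
    (hpos : ∀ i, 0 < μ i) (hanti : ∀ i j : Fin L, i ≤ j → μ j ≤ μ i)
    (hr : r = ∑ i, μ i)
    (kk : ℕ → ℕ)
    (hk : ∀ (c : ℕ) (hc : c + 1 < L), 1 ≤ kk c ∧ kk c ≤ μ ⟨c+1, hc⟩)
    (ρ : Equiv.Perm (Fin r) → (MLam K μ r →ₗ[K] MLam K μ r))
    (hρ : IsTabAction K μ r ρ)
    (hcond : ∀ (c : ℕ) (hc : c + 1 < L),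
      kk c = μ ⟨c+1, hc⟩ → 1 < kk c → μ ⟨c+1, hc⟩ < μ ⟨c, by omega⟩) :
    IsQuotIso K (grSub K μ r kk) (garnirSub K μ r) ρ ρ ∧
      grSub K μ r kk = garnirSub K μ r :=
  statement16_general hk (fun c hc => by
    have hle : μ ⟨c + 1, hc⟩ ≤ μ ⟨c, Nat.lt_of_succ_lt hc⟩ := hanti _ _ (by simp)
    have := hk c hc
    have := hcond c hc
    omega) hρ

end Specht
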